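/- In the twin prime power construction, for every nonzero β ∈ K one has N_β · N_{−β} = q²·I_{(q+2)q²} + q·J_{(q+2)q²}; in particular each N_β is the incidence matrix of a symmetric 2-design with parameters (q²(q+2), q(q+1), q). -/

import Mathlib

open Matrix Kronecker BigOperators

noncomputable section

/-- The all-ones matrix. -/
def allOnes (n : Type*) : Matrix n n ℝ := Matrix.of fun _ _ => 1

/-- The auxiliary matrices `C_a` for `a ∈ F ∪ {y}` (formally `Option F`, with `none`
playing the role of the extra symbol `y`, so that `C_y = I_q ⊗ J_q`). -/
def auxC {F : Type*} [Field F] [Fintype F] [DecidableEq F] :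
    Option F → Matrix (F × F) (F × F) ℝ
  | some α => Matrix.of fun p r => if r.2 - p.2 = α * (r.1 - p.1) then 1 else 0
  | none => Matrix.of fun p r => if p.1 = r.1 then 1 else 0

/-- The permutation matrix `P_{β,γ}` with `(a,b)`-entry `1` iff `β·(−a+b) = γ`. -/
def permP {K : Type*} [Field K] [DecidableEq K] (β γ : K) : Matrix K K ℝ :=
  Matrix.of fun a b => if β * (-a + b) = γ then 1 else 0

/-- The matrix `N_β = Σ_{γ∈K∖{0}} P_{β,γ} ⊗ C_{ψ(γ)}` of the twin prime power
construction, where `ψ : K∖{0} → F ∪ {y}` is a fixed bijection. -/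
def NN {F K : Type*} [Field F] [Fintype F] [DecidableEq F]
    [Field K] [Fintype K] [DecidableEq K]
    (ψ : {x : K // x ≠ 0} ≃ Option F) (β : K) :
    Matrix (K × (F × F)) (K × (F × F)) ℝ :=
  ∑ γ : {x : K // x ≠ 0}, permP β (γ : K) ⊗ₖ auxC (ψ γ)

lemma auxC_symm {F : Type*} [Field F] [Fintype F] [DecidableEq F] (a : Option F) (p r : F × F) :
    auxC a p r = auxC a r p := by
  cases a with
  | none => simp only [auxC, Matrix.of_apply]; simp only [eq_comm]
  | some α =>
    simp only [auxC, Matrix.of_apply]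
    refine if_congr ?_ rfl rfl
    constructor <;> intro h <;> linear_combination -h

lemma auxC_some_mul {F : Type*} [Field F] [Fintype F] [DecidableEq F] (α : F)
    (f : F × F → ℝ) (p : F × F) :
    ∑ r, auxC (some α) p r * f r = ∑ s, f (s, p.2 + α * (s - p.1)) := by
  rw [Fintype.sum_prod_type]
  refine Finset.sum_congr rfl fun s _ => ?_
  rw [Finset.sum_eq_single (p.2 + α * (s - p.1))]
  · simp [auxC]
  · intro t _ ht
    have : ¬ (t - p.2 = α * (s - p.1)) := fun h => ht (by linear_combination h)
    simp [auxC, this]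
  · simp

lemma auxC_none_mul {F : Type*} [Field F] [Fintype F] [DecidableEq F]
    (f : F × F → ℝ) (p : F × F) :
    ∑ r, auxC none p r * f r = ∑ t, f (p.1, t) := by
  rw [Fintype.sum_prod_type, Finset.sum_eq_single p.1]
  · simp [auxC]
  · intro s _ hs
    simp [auxC, hs.symm]
  · simp

lemma auxC_mul_self {F : Type*} [Field F] [Fintype F] [DecidableEq F] (a : Option F)
    (p r : F × F) :
    ∑ s, auxC a p s * auxC a s r = (Fintype.card F : ℝ) * auxC a p r := by
  cases a with
  | none => rw [auxC_none_mul]; simp only [auxC, Matrix.of_apply]; split_ifs <;> simp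
  | some α =>
    rw [auxC_some_mul, Finset.sum_congr rfl (g := fun _ => auxC (some α) p r)]
    · simp
    · intro s _
      simp only [auxC, Matrix.of_apply]
      refine if_congr ?_ rfl rfl
      constructor <;> intro h <;> linear_combination h

lemma auxC_mul_ne {F : Type*} [Field F] [Fintype F] [DecidableEq F] (a b : Option F) (hab : a ≠ b)
    (p r : F × F) :
    ∑ s, auxC a p s * auxC b s r = 1 := by
  cases a with
  | none =>
    cases b with
    | none => exact absurd rfl hab
    | some β =>
      rw [auxC_none_mul, Finset.sum_eq_single (r.2 - β * (r.1 - p.1))]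
      · simp [auxC]
      · intro t _ ht
        have : ¬ (r.2 - t = β * (r.1 - p.1)) := fun h => ht (by linear_combination -h)
        simp [auxC, this]
      · simp
  | some α =>
    rw [auxC_some_mul]
    cases b with
    | none => simp [auxC]
    | some β =>
      have hne : α - β ≠ 0 := fun h => hab (by rw [sub_eq_zero.mp h])
      rw [Finset.sum_eq_single ((r.2 - p.2 + α * p.1 - β * r.1) / (α - β))]
      · simp only [auxC, Matrix.of_apply]
        rw [if_pos]
        field_simp
        ring
      · intro t _ ht
        simp only [auxC, Matrix.of_apply]
        rw [if_neg]
        intro h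
        apply ht
        rw [eq_div_iff hne]
        linear_combination -h
      · simp

lemma auxC_sum {F : Type*} [Field F] [Fintype F] [DecidableEq F] (p r : F × F) :
    ∑ a, auxC a p r = (Fintype.card F : ℝ) * (if p = r then 1 else 0) + 1 := by
  rw [Fintype.sum_option]
  obtain ⟨a, u⟩ := p
  obtain ⟨b, v⟩ := r
  simp only [auxC, Matrix.of_apply, Prod.mk.injEq]
  by_cases h : a = b
  · subst h
    by_cases h' : u = v
    · subst h'; simp; ring
    · have : ¬ (v - u = 0) := fun h => h' (sub_eq_zero.mp h).symm
      simp [h', this]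
  · have hne : b - a ≠ 0 := fun h' => h (sub_eq_zero.mp h').symm
    rw [Finset.sum_eq_single ((v - u) / (b - a))]
    · simp [h, hne]
    · intro t _ ht
      rw [if_neg]
      intro h; apply ht; rw [eq_div_iff hne, h]
    · simp

def DD {F K : Type*} [Field F] [Fintype F] [DecidableEq F] [Field K] [DecidableEq K]
    (ψ : {x : K // x ≠ 0} ≃ Option F) (x : K) : Matrix (F × F) (F × F) ℝ :=
  if h : x ≠ 0 then auxC (ψ ⟨x, h⟩) else 0

lemma NN_apply {F K : Type*} [Field F] [Fintype F] [DecidableEq F]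
    [Field K] [Fintype K] [DecidableEq K]
    (ψ : {x : K // x ≠ 0} ≃ Option F) (β : K) (k l : K) (p r : F × F) :
    NN ψ β (k, p) (l, r) = DD ψ (β * (l - k)) p r := by
  simp only [NN, Matrix.sum_apply, Matrix.kroneckerMap_apply, permP, Matrix.of_apply, DD,
    neg_add_eq_sub]
  split_ifs with h
  · rw [Finset.sum_eq_single ⟨β * (l - k), h⟩]
    · simp
    · intro γ _ hγ
      rw [if_neg, zero_mul]
      intro h'
      exact hγ (Subtype.ext h'.symm)
    · simp
  · apply Finset.sum_eq_zero
    intro γ _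
    rw [if_neg, zero_mul]
    intro h'
    exact h (h' ▸ γ.2)

lemma DD_symm {F K : Type*} [Field F] [Fintype F] [DecidableEq F] [Field K] [DecidableEq K]
    (ψ : {x : K // x ≠ 0} ≃ Option F) (x : K) (p r : F × F) : DD ψ x p r = DD ψ x r p := by
  unfold DD
  split_ifs
  · exact auxC_symm _ _ _
  · rfl

lemma NN_transpose {F K : Type*} [Field F] [Fintype F] [DecidableEq F]
    [Field K] [Fintype K] [DecidableEq K]
    (ψ : {x : K // x ≠ 0} ≃ Option F) (β : K) : (NN ψ β)ᵀ = NN ψ (-β) := by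
  ext ⟨k, p⟩ ⟨l, r⟩
  rw [Matrix.transpose_apply, NN_apply, NN_apply, DD_symm]
  congr 1
  ring_nf

lemma NN_main {F K : Type*} [Field F] [Fintype F] [DecidableEq F]
    [Field K] [Fintype K] [DecidableEq K]
    (hcard : Fintype.card K = Fintype.card F + 2)
    (ψ : {x : K // x ≠ 0} ≃ Option F) (β : K) (hβ : β ≠ 0) :
    NN ψ β * NN ψ (-β) =
      (Fintype.card F : ℝ) ^ 2 • (1 : Matrix (K × (F × F)) (K × (F × F)) ℝ) +
        (Fintype.card F : ℝ) • allOnes (K × (F × F)) := by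
  ext ⟨k, p⟩ ⟨m, r⟩
  rw [Matrix.mul_apply, Fintype.sum_prod_type]
  simp only [NN_apply, Matrix.add_apply, Matrix.smul_apply, allOnes, Matrix.of_apply,
    Matrix.one_apply, smul_eq_mul, mul_one, Prod.mk.injEq]
  by_cases hkm : k = m
  · subst hkm
    have h1 : ∀ l : K, -β * (k - l) = β * (l - k) := fun l => by ring
    simp only [h1]
    let e : K ≃ K := (Equiv.subRight k).trans (Equiv.mulLeft₀ β hβ)
    refine (e.sum_comp (fun x => ∑ s, DD ψ x p s * DD ψ x s r)).trans ?_
    have h2 : ∑ x : K, ∑ s, DD ψ x p s * DD ψ x s r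
        = ∑ x : {x : K // x ≠ 0}, (Fintype.card F : ℝ) * auxC (ψ x) p r := by
      have h3 : ∀ x : {x : K // x ≠ 0}, (Fintype.card F : ℝ) * auxC (ψ x) p r
          = ∑ s, DD ψ x.1 p s * DD ψ x.1 s r := by
        rintro ⟨x, hx⟩
        simp only [DD, dif_pos hx]
        rw [auxC_mul_self]
      simp only [h3]
      rw [← Finset.sum_subtype (Finset.univ.filter (fun x : K => x ≠ 0)) (by simp)
        (fun x : K => ∑ s, DD ψ x p s * DD ψ x s r)]
      symm
      apply Finset.sum_subset (Finset.subset_univ _)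
      intro x _ hx
      have hx0 : x = 0 := by simpa using hx
      simp [DD, hx0]
    rw [h2, ← Finset.mul_sum, ψ.sum_comp (fun a => auxC a p r), auxC_sum]
    simp only [true_and]
    ring
  · have h1 : ∀ l : K, ∑ s, DD ψ (β * (l - k)) p s * DD ψ (-β * (m - l)) s r
        = if l ∈ ({k, m} : Finset K)ᶜ then 1 else 0 := by
      intro l
      by_cases hk : l = k
      · simp [hk, DD]
      by_cases hm : l = m
      · simp [hm, DD]
      have e1 : β * (l - k) ≠ 0 := mul_ne_zero hβ (sub_ne_zero.mpr hk)
      have e2 : -β * (m - l) ≠ 0 := mul_ne_zero (neg_ne_zero.mpr hβ) (sub_ne_zero.mpr (Ne.symm hm))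
      simp only [DD, dif_pos e1, dif_pos e2]
      rw [auxC_mul_ne]
      · simp [hk, hm]
      · intro h
        have h3 := congrArg Subtype.val (ψ.injective h)
        simp only at h3
        have h4 : β * (k - m) = 0 := by linear_combination -h3
        exact (mul_ne_zero hβ (sub_ne_zero.mpr hkm)) h4
    simp only [h1]
    rw [Finset.sum_ite_mem, Finset.univ_inter, Finset.sum_const, Finset.card_compl,
      Finset.card_pair hkm, hcard]
    simp [hkm]

/-- In the twin prime power construction, `N_β · N_{−β} = q²·I + q·J`; in particular
`N_β` is a `(0,1)`-matrix satisfying the equations of the incidence matrix of a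
symmetric `2`-design with parameters `(q²(q+2), q(q+1), q)`. -/
theorem NN_mul_neg {F K : Type*} [Field F] [Fintype F] [DecidableEq F]
    [Field K] [Fintype K] [DecidableEq K]
    (hcard : Fintype.card K = Fintype.card F + 2)
    (ψ : {x : K // x ≠ 0} ≃ Option F) (β : K) (hβ : β ≠ 0) :
    NN ψ β * NN ψ (-β) =
      (Fintype.card F : ℝ) ^ 2 • (1 : Matrix (K × (F × F)) (K × (F × F)) ℝ) +
        (Fintype.card F : ℝ) • allOnes (K × (F × F)) ∧
    (∀ p r, NN ψ β p r = 0 ∨ NN ψ β p r = 1) ∧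
    NN ψ β * (NN ψ β)ᵀ =
      ((Fintype.card F : ℝ) * ((Fintype.card F : ℝ) + 1)) •
          (1 : Matrix (K × (F × F)) (K × (F × F)) ℝ) +
        (Fintype.card F : ℝ) • (allOnes (K × (F × F)) - 1) ∧
    (NN ψ β)ᵀ * NN ψ β =
      ((Fintype.card F : ℝ) * ((Fintype.card F : ℝ) + 1)) •
          (1 : Matrix (K × (F × F)) (K × (F × F)) ℝ) +
        (Fintype.card F : ℝ) • (allOnes (K × (F × F)) - 1) := by
  have hm := NN_main hcard ψ β hβ
  have hm2 := NN_main hcard ψ (-β) (neg_ne_zero.mpr hβ)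
  rw [neg_neg] at hm2
  have key : (Fintype.card F : ℝ) ^ 2 • (1 : Matrix (K × (F × F)) (K × (F × F)) ℝ) +
        (Fintype.card F : ℝ) • allOnes (K × (F × F)) =
      ((Fintype.card F : ℝ) * ((Fintype.card F : ℝ) + 1)) •
          (1 : Matrix (K × (F × F)) (K × (F × F)) ℝ) +
        (Fintype.card F : ℝ) • (allOnes (K × (F × F)) - 1) := by
    module
  refine ⟨hm, ?_, ?_, ?_⟩
  · rintro ⟨k, p⟩ ⟨l, r⟩
    rw [NN_apply]
    unfold DD
    split_ifs with h
    · cases ψ ⟨β * (l - k), h⟩ <;> simp only [auxC, Matrix.of_apply] <;> split_ifs <;> simp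
    · left; rfl
  · rw [NN_transpose, hm, key]
  · rw [NN_transpose, hm2, key]
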